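/- Let η(ξ) be a C_0^∞ function on ℝⁿ, let ψ(x,ξ) ∈ Φ¹, and set K(x,z) = ∫_{ℝⁿ} η(ξ) e^{i(ψ(x,ξ) + ⟨z,ξ⟩)} dξ. Then for any α ∈ (0,1) there exists a constant c > 0 such that |K(x,z)| ≤ c (1+|z|)^{−n−α} for all x, z ∈ ℝⁿ. -/

import Mathlib

open MeasureTheory Real Complex
open scoped ENNReal NNReal RealInnerProductSpace SchwartzMap Classical

noncomputable section

/-- `ℝⁿ` as a Euclidean space. -/
abbrev En (n : ℕ) : Type := EuclideanSpace ℝ (Fin n)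

/-- Partial derivative in the `i`-th coordinate direction. -/
def pd {n : ℕ} {F : Type} [NormedAddCommGroup F] [NormedSpace ℝ F]
    (i : Fin n) (f : En n → F) : En n → F :=
  fun x => fderiv ℝ f x (EuclideanSpace.single i 1)

/-- Multi-index partial derivative `∂^α`. -/
def mderiv {n : ℕ} {F : Type} [NormedAddCommGroup F] [NormedSpace ℝ F]
    (α : Fin n → ℕ) (f : En n → F) : En n → F :=
  (List.finRange n).foldr (fun i g => (pd i)^[α i] g) f

/-- The order `|α|` of a multi-index. -/
def mdeg {n : ℕ} (α : Fin n → ℕ) : ℕ := ∑ i, α i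

/-- The finite set of multi-indices `α` with every entry `≤ k` and `|α| ≤ k`;
this enumerates all multi-indices of order at most `k`. -/
def multiIdx (n k : ℕ) : Finset (Fin n → ℕ) :=
  (Fintype.piFinset fun _ : Fin n => Finset.range (k + 1)).filter fun α => mdeg α ≤ k

/-- Japanese bracket `⟨ξ⟩^t = (1+|ξ|²)^{t/2}`. -/
def jb {n : ℕ} (ξ : En n) (t : ℝ) : ℝ := (1 + ‖ξ‖ ^ 2) ^ (t / 2)

/-- The rough amplitude class `L^p S^m_ρ`. -/
def LpSm {n : ℕ} (p : ℝ≥0∞) (m ρ : ℝ) (a : En n → En n → ℂ) : Prop :=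
  (∀ x, ContDiff ℝ (⊤ : ℕ∞) (a x)) ∧
  (∀ (α : Fin n → ℕ) (ξ : En n), AEStronglyMeasurable (fun x => mderiv α (a x) ξ) volume) ∧
  ∀ α : Fin n → ℕ, ∃ C : ℝ, ∀ ξ : En n,
    eLpNorm (fun x => mderiv α (a x) ξ) p volume ≤
      ENNReal.ofReal (C * jb ξ (m - ρ * (mdeg α : ℝ)))

/-- The seminorms `|a|_{p,m,s}` of an amplitude in `L^p S^m_ρ`. -/
def aSemi {n : ℕ} (p : ℝ≥0∞) (m ρ : ℝ) (s : ℕ) (a : En n → En n → ℂ) : ℝ≥0∞ :=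
  ∑ α ∈ multiIdx n s, ⨆ ξ : En n,
    ENNReal.ofReal (jb ξ (ρ * (mdeg α : ℝ) - m)) *
      eLpNorm (fun x => mderiv α (a x) ξ) p volume

/-- The mixed derivative `∂_ξ^α ∂_x^β φ(x,ξ)`. -/
def mixedD {n : ℕ} (α β : Fin n → ℕ) (φ : En n → En n → ℝ) (x ξ : En n) : ℝ :=
  mderiv α (fun ζ => mderiv β (fun y => φ y ζ) x) ξ

/-- The phase function class `Φ^k`. -/
def PhiClass {n : ℕ} (k : ℕ) (φ : En n → En n → ℝ) : Prop :=
  ContDiffOn ℝ (⊤ : ℕ∞) (fun q : En n × En n => φ q.1 q.2) {q | q.2 ≠ 0} ∧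
  (∀ (x ξ : En n) (t : ℝ), 0 < t → φ x (t • ξ) = t * φ x ξ) ∧
  ∀ α β : Fin n → ℕ, k ≤ mdeg α + mdeg β →
    ∃ C : ℝ, ∀ (x ξ : En n), ξ ≠ 0 →
      ‖ξ‖ ^ ((mdeg α : ℝ) - 1) * |mixedD α β φ x ξ| ≤ C

/-- The mixed Hessian matrix `[∂²φ/∂x_j∂ξ_k]`. -/
def mixHess {n : ℕ} (φ : En n → En n → ℝ) (x ξ : En n) : Matrix (Fin n) (Fin n) ℝ :=
  Matrix.of fun j k => pd j (fun y => pd k (φ y) ξ) x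

/-- The strong non-degeneracy (SND) condition. -/
def SNDcond {n : ℕ} (φ : En n → En n → ℝ) : Prop :=
  ∃ c : ℝ, 0 < c ∧ ∀ (x ξ : En n), ξ ≠ 0 → c ≤ |(mixHess φ x ξ).det|

/-- The Fourier transform `f̂(ξ) = ∫ e^{-i⟨y,ξ⟩} f(y) dy`. -/
def ft {n : ℕ} (f : En n → ℂ) (ξ : En n) : ℂ :=
  ∫ y : En n, Complex.exp (-(Complex.I * Complex.ofReal ⟪y, ξ⟫)) * f y

/-- The linear Fourier integral operator
`T_a f(x) = (2π)^{-n} ∫ e^{iφ(x,ξ)} a(x,ξ) f̂(ξ) dξ`. -/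
def fio {n : ℕ} (a : En n → En n → ℂ) (φ : En n → En n → ℝ) (f : En n → ℂ)
    (x : En n) : ℂ :=
  (((2 * Real.pi) ^ n)⁻¹ : ℝ) •
    ∫ ξ : En n, Complex.exp (Complex.I * Complex.ofReal (φ x ξ)) * a x ξ * ft f ξ

/-- The conjugate exponent `p′` of `p ∈ [1,∞]`. -/
def pconj (p : ℝ≥0∞) : ℝ≥0∞ := (1 - p⁻¹)⁻¹

/-- The order `𝔪(ρ,p,q)` from Definition 4.6. -/
def frakm (n : ℕ) (ρ : ℝ) (p q : ℝ≥0∞) : ℝ :=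
  if p < 2 ∨ (2 ≤ p ∧ q < pconj p) then
    (n : ℝ) * (ρ - 1) * (min p q)⁻¹.toReal -
      (((n : ℝ) - 1) / 2) * (p⁻¹.toReal + (min p q)⁻¹.toReal)
  else if 2 ≤ q then
    (n : ℝ) * (ρ - 1) / 2 - ((n : ℝ) - 1) * (1 / 2 - q⁻¹.toReal)
  else
    (n : ℝ) * (ρ - 1) * q⁻¹.toReal -
      (((n : ℝ) - 1) / (1 - 2 * p⁻¹.toReal)) * (q⁻¹.toReal - 1 / 2)

/-- The order `ℳ(ρ,p,q)` from Definition 4.6. -/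
def scrM (n : ℕ) (ρ : ℝ) (p q : ℝ≥0∞) : ℝ :=
  (n : ℝ) * (ρ - 1) * q⁻¹.toReal -
    (((n : ℝ) - 1) / (1 + p⁻¹.toReal)) * (q⁻¹.toReal - 1 / 2)

/-- The distribution function `λ_f(s) = |{x : |f(x)| > s}|`. -/
def distFn {n : ℕ} (f : En n → ℂ) (s : ℝ) : ℝ≥0∞ := volume {x : En n | s < ‖f x‖}

/-- The decreasing rearrangement `f*`. -/
def rearr {n : ℕ} (f : En n → ℂ) (t : ℝ) : ℝ :=
  sInf {s : ℝ | 0 ≤ s ∧ distFn f s ≤ ENNReal.ofReal t}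

/-- The Lorentz space quasinorm
`‖f‖_{L^{r,q}} = (∫_0^∞ (t^{1/r} f*(t))^q dt/t)^{1/q}`. -/
def lorentzNorm {n : ℕ} (r q : ℝ≥0∞) (f : En n → ℂ) : ℝ≥0∞ :=
  (∫⁻ t in Set.Ioi (0 : ℝ),
      ENNReal.ofReal ((t ^ r⁻¹.toReal * rearr f t) ^ q.toReal / t)) ^ q⁻¹.toReal

/-- Mixed frequency derivatives `∂_ξ^{α₁} ∂_η^{α₂} a(x,ξ,η)` of a bilinear amplitude. -/
def d2 {n : ℕ} (α₁ α₂ : Fin n → ℕ) (a : En n → En n → En n → ℂ)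
    (x ξ η : En n) : ℂ :=
  mderiv α₁ (fun ζ => mderiv α₂ (fun θ => a x ζ θ) η) ξ

/-- Mixed derivatives `∂_x^β ∂_ξ^{α₁} ∂_η^{α₂} a(x,ξ,η)` of a bilinear amplitude. -/
def d3 {n : ℕ} (β α₁ α₂ : Fin n → ℕ) (a : En n → En n → En n → ℂ)
    (x ξ η : En n) : ℂ :=
  mderiv β (fun y => d2 α₁ α₂ a y ξ η) x

/-- The bilinear product-type rough amplitude class `L^p_Π S^{(m₁,m₂)}_{(ρ₁,ρ₂)}(n,2)`. -/
def LpPiSm2 {n : ℕ} (p : ℝ≥0∞) (m₁ m₂ ρ₁ ρ₂ : ℝ) (a : En n → En n → En n → ℂ) : Prop :=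
  (∀ x, ContDiff ℝ (⊤ : ℕ∞) (fun q : En n × En n => a x q.1 q.2)) ∧
  (∀ (α₁ α₂ : Fin n → ℕ) (ξ η : En n),
    AEStronglyMeasurable (fun x => d2 α₁ α₂ a x ξ η) volume) ∧
  ∀ α₁ α₂ : Fin n → ℕ, ∃ C : ℝ, ∀ ξ η : En n,
    eLpNorm (fun x => d2 α₁ α₂ a x ξ η) p volume ≤
      ENNReal.ofReal (C * jb ξ (m₁ - ρ₁ * (mdeg α₁ : ℝ)) * jb η (m₂ - ρ₂ * (mdeg α₂ : ℝ)))

/-- The bilinear rough amplitude class `L^p S^m_ρ(n,2)`. -/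
def LpSm2 {n : ℕ} (p : ℝ≥0∞) (m ρ : ℝ) (a : En n → En n → En n → ℂ) : Prop :=
  (∀ x, ContDiff ℝ (⊤ : ℕ∞) (fun q : En n × En n => a x q.1 q.2)) ∧
  (∀ (α₁ α₂ : Fin n → ℕ) (ξ η : En n),
    AEStronglyMeasurable (fun x => d2 α₁ α₂ a x ξ η) volume) ∧
  ∀ α₁ α₂ : Fin n → ℕ, ∃ C : ℝ, ∀ ξ η : En n,
    eLpNorm (fun x => d2 α₁ α₂ a x ξ η) p volume ≤
      ENNReal.ofReal (C * (1 + ‖ξ‖ + ‖η‖) ^ (m - ρ * ((mdeg α₁ : ℝ) + (mdeg α₂ : ℝ))))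

/-- The bilinear Hörmander class `S^m_{ρ,δ}(n,2)`. -/
def HormS2 {n : ℕ} (m ρ δ : ℝ) (a : En n → En n → En n → ℂ) : Prop :=
  ContDiff ℝ (⊤ : ℕ∞) (fun q : En n × En n × En n => a q.1 q.2.1 q.2.2) ∧
  ∀ β α₁ α₂ : Fin n → ℕ, ∃ C : ℝ, ∀ x ξ η : En n,
    ‖d3 β α₁ α₂ a x ξ η‖ ≤
      C * (1 + ‖ξ‖ + ‖η‖) ^ (m - ρ * ((mdeg α₁ : ℝ) + (mdeg α₂ : ℝ)) + δ * (mdeg β : ℝ))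

/-- The bilinear Fourier integral operator
`T_a(f,g)(x) = ∫∫ a(x,ξ,η) e^{iφ₁(x,ξ)+iφ₂(x,η)} f̂(ξ) ĝ(η) dξ dη`. -/
def bfio {n : ℕ} (a : En n → En n → En n → ℂ) (φ₁ φ₂ : En n → En n → ℝ)
    (f g : En n → ℂ) (x : En n) : ℂ :=
  ∫ w : En n × En n,
    a x w.1 w.2 * Complex.exp (Complex.I * Complex.ofReal (φ₁ x w.1 + φ₂ x w.2)) *
      ft f w.1 * ft g w.2

/-- Partial derivative of a function of `N` frequency variables in the `i`-th coordinate
of the `j`-th variable. -/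
def pdN {n N : ℕ} (j : Fin N) (i : Fin n) (g : (Fin N → En n) → ℂ) :
    (Fin N → En n) → ℂ :=
  fun ξ => fderiv ℝ g ξ (Pi.single j (EuclideanSpace.single i 1))

/-- Multi-index derivative `∂_{ξ₁}^{A 1} ⋯ ∂_{ξ_N}^{A N}`. -/
def mderivN {n N : ℕ} (A : Fin N → Fin n → ℕ) (g : (Fin N → En n) → ℂ) :
    (Fin N → En n) → ℂ :=
  (List.finRange N).foldr
    (fun j h => (List.finRange n).foldr (fun i h' => (pdN j i)^[A j i] h') h) g

/-- The multilinear product-type rough amplitude class `L^p_Π S^{m⃗}_{ρ⃗}(n,N)`. -/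
def LpPiSmN {n N : ℕ} (p : ℝ≥0∞) (m ρ : Fin N → ℝ)
    (a : En n → (Fin N → En n) → ℂ) : Prop :=
  (∀ x, ContDiff ℝ (⊤ : ℕ∞) (a x)) ∧
  (∀ (A : Fin N → Fin n → ℕ) (ξ : Fin N → En n),
    AEStronglyMeasurable (fun x => mderivN A (a x) ξ) volume) ∧
  ∀ A : Fin N → Fin n → ℕ, ∃ C : ℝ, ∀ ξ : Fin N → En n,
    eLpNorm (fun x => mderivN A (a x) ξ) p volume ≤
      ENNReal.ofReal (C * ∏ j, jb (ξ j) (m j - ρ j * (mdeg (A j) : ℝ)))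

/-- The multilinear rough amplitude class `L^p S^m_ρ(n,N)`. -/
def LpSmN {n N : ℕ} (p : ℝ≥0∞) (m ρ : ℝ) (a : En n → (Fin N → En n) → ℂ) : Prop :=
  (∀ x, ContDiff ℝ (⊤ : ℕ∞) (a x)) ∧
  (∀ (A : Fin N → Fin n → ℕ) (ξ : Fin N → En n),
    AEStronglyMeasurable (fun x => mderivN A (a x) ξ) volume) ∧
  ∀ A : Fin N → Fin n → ℕ, ∃ C : ℝ, ∀ ξ : Fin N → En n,
    eLpNorm (fun x => mderivN A (a x) ξ) p volume ≤
      ENNReal.ofReal (C * (1 + ∑ j, ‖ξ j‖) ^ (m - ρ * ∑ j, (mdeg (A j) : ℝ)))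

/-- The multilinear Fourier integral operator. -/
def mfio {n N : ℕ} (a : En n → (Fin N → En n) → ℂ) (φ : Fin N → En n → En n → ℝ)
    (f : Fin N → En n → ℂ) (x : En n) : ℂ :=
  ∫ ξ : Fin N → En n,
    a x ξ * Complex.exp (Complex.I * Complex.ofReal (∑ j, φ j x (ξ j))) *
      ∏ j, ft (f j) (ξ j)

/-- The Sobolev (Bessel potential) norm `‖f‖_{H^{s,q}} = ‖ℱ^{-1}(⟨ξ⟩^s f̂)‖_{L^q}`. -/
def besselNorm {n : ℕ} (s : ℝ) (q : ℝ≥0∞) (f : En n → ℂ) : ℝ≥0∞ :=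
  eLpNorm (fun x : En n =>
    (((2 * Real.pi) ^ n)⁻¹ : ℝ) •
      ∫ ξ : En n, Complex.ofReal (jb ξ s) * ft f ξ *
        Complex.exp (Complex.I * Complex.ofReal ⟪x, ξ⟫)) q volume

/-- Finite difference bounded by the derivative, in one dimension. -/
lemma fd_bound (B : ℝ) (N : ℕ) : ∀ g : ℕ → ℝ → ℂ,
    (∀ k < N, ∀ s ∈ Set.Icc (0:ℝ) N, HasDerivAt (g k) (g (k+1) s) s) →
    (∀ s ∈ Set.Icc (0:ℝ) N, ‖g N s‖ ≤ B) →
    ‖(fwdDiff (1:ℝ))^[N] (g 0) 0‖ ≤ B := by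
  induction N with
  | zero =>
    intro g _ hb
    simpa using hb 0 (by simp)
  | succ N ih =>
    intro g hd hb
    rw [Function.iterate_succ_apply]
    refine ih (fun k => fwdDiff (1:ℝ) (g k)) ?_ ?_
    · intro k hk s hs
      have h1 := hd k (by omega) s ⟨hs.1, by push_cast; linarith [hs.2]⟩
      have h2 := hd k (by omega) (s+1) ⟨by linarith [hs.1], by push_cast; linarith [hs.2]⟩
      exact (h2.comp_add_const s 1).sub h1
    · intro s hs
      have := norm_image_sub_le_of_norm_deriv_le_segment' (f := g N) (f' := g (N+1)) (C := B)
        (a := s) (b := s+1)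
        (fun x hx => (hd N (by omega) x ⟨by linarith [hs.1, hx.1],
          by push_cast; linarith [hs.2, hx.2]⟩).hasDerivWithinAt)
        (fun x hx => hb x ⟨by linarith [hs.1, hx.1], by push_cast; linarith [hs.2, hx.2]⟩)
        (s+1) (by simp)
      simpa [fwdDiff] using this

lemma fd_line {n : ℕ} (f : En n → ℂ) (ξ v : En n) (N : ℕ) :
    (fwdDiff v)^[N] f ξ = (fwdDiff (1:ℝ))^[N] (fun s => f (ξ + s • v)) 0 := by
  rw [fwdDiff_iter_eq_sum_shift, fwdDiff_iter_eq_sum_shift]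
  refine Finset.sum_congr rfl fun k _ => ?_
  simp [← Nat.cast_smul_eq_nsmul ℝ]

lemma fd_trivial {n : ℕ} (v : En n) (B : ℝ) (N : ℕ) : ∀ (f : En n → ℂ) (ξ : En n),
    (∀ k ≤ N, ‖f (ξ + (k:ℝ) • v)‖ ≤ B) → ‖(fwdDiff v)^[N] f ξ‖ ≤ 2 ^ N * B := by
  induction N with
  | zero =>
    intro f ξ h
    simpa using h 0 le_rfl
  | succ N ih =>
    intro f ξ h
    rw [Function.iterate_succ_apply']
    have h1 := ih f ξ (fun k hk => h k (by omega))
    have h2 := ih f (ξ + v) (fun k hk => by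
      have := h (k+1) (by omega)
      convert this using 3
      push_cast
      rw [add_smul, one_smul]; abel)
    calc _ ≤ _ := norm_sub_le _ _
      _ ≤ 2 ^ N * B + 2 ^ N * B := add_le_add h2 h1
      _ = _ := by ring

lemma fd_sub_const {n : ℕ} (v : En n) (N : ℕ) (f : En n → ℂ) (c : ℂ) :
    (fwdDiff v)^[N+1] f = (fwdDiff v)^[N+1] (fun ξ => f ξ - c) := by
  rw [Function.iterate_succ_apply, Function.iterate_succ_apply]
  congr 1
  funext ξ
  simp [fwdDiff]

/-- Each difference multiplies the oscillatory integral by `-2`. -/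
lemma fd_integral {n : ℕ} (z v : En n) (hzv : ⟪z, v⟫ = Real.pi) (N : ℕ) : ∀ f : En n → ℂ,
    Integrable (fun ξ => f ξ * Complex.exp (Complex.I * Complex.ofReal ⟪z, ξ⟫)) →
    ∫ ξ, (fwdDiff v)^[N] f ξ * Complex.exp (Complex.I * Complex.ofReal ⟪z, ξ⟫) =
      (-2) ^ N * ∫ ξ, f ξ * Complex.exp (Complex.I * Complex.ofReal ⟪z, ξ⟫) := by
  induction N with
  | zero => intro f _; simp
  | succ N ih =>
    intro f hf
    have key : ∀ ξ, f (ξ + v) * Complex.exp (Complex.I * Complex.ofReal ⟪z, ξ⟫) =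
        - (fun ζ => f ζ * Complex.exp (Complex.I * Complex.ofReal ⟪z, ζ⟫)) (ξ + v) := by
      intro ξ
      simp only [inner_add_right, hzv]
      push_cast
      rw [mul_add, Complex.exp_add, mul_comm Complex.I (Real.pi:ℂ), Complex.exp_pi_mul_I]
      ring
    have hi : Integrable (fun ξ => - (fun ζ => f ζ *
        Complex.exp (Complex.I * Complex.ofReal ⟪z, ζ⟫)) (ξ + v)) := (hf.comp_add_right v).neg
    have h1 : (fun ξ => fwdDiff v f ξ * Complex.exp (Complex.I * Complex.ofReal ⟪z, ξ⟫)) =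
        fun ξ => - (fun ζ => f ζ * Complex.exp (Complex.I * Complex.ofReal ⟪z, ζ⟫)) (ξ + v) -
          f ξ * Complex.exp (Complex.I * Complex.ofReal ⟪z, ξ⟫) := by
      funext ξ
      rw [← key, fwdDiff, sub_mul]
    rw [Function.iterate_succ_apply, ih]
    · rw [h1, integral_sub hi hf, integral_neg,
        integral_add_right_eq_self (fun ζ => f ζ * Complex.exp (Complex.I * Complex.ofReal ⟪z, ζ⟫))]
      ring
    · rw [h1]; exact hi.sub hf

/-- Symbol-type families along the direction `e`, on the punctured ball of radius `R`. -/
def SymC {n : ℕ} (e : En n) (R : ℝ) : ℕ → ℕ → (En n → En n → ℂ) → Prop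
  | 0, m, F => ∃ C : ℝ, 0 ≤ C ∧ ∀ x ξ, ξ ≠ 0 → ‖ξ‖ < R → ‖F x ξ‖ ≤ C * (‖ξ‖⁻¹) ^ m
  | K+1, m, F => (∃ C : ℝ, 0 ≤ C ∧ ∀ x ξ, ξ ≠ 0 → ‖ξ‖ < R → ‖F x ξ‖ ≤ C * (‖ξ‖⁻¹) ^ m) ∧
      ∃ F' : En n → En n → ℂ,
        (∀ x ξ, ξ ≠ 0 → ‖ξ‖ < R → HasLineDerivAt ℝ (F x) (F' x ξ) ξ e) ∧ SymC e R K (m+1) F'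

section sym
variable {n : ℕ} {e : En n} {R : ℝ}

lemma SymC.zero' {K m : ℕ} {F : En n → En n → ℂ} (h : SymC e R K m F) : SymC e R 0 m F := by
  cases K with
  | zero => exact h
  | succ K => exact h.1

lemma SymC.pred {K : ℕ} : ∀ {m : ℕ} {F : En n → En n → ℂ}, SymC e R (K+1) m F → SymC e R K m F := by
  induction K with
  | zero => intro m F h; exact h.1
  | succ K ih =>
    intro m F h
    obtain ⟨h0, F', hF', h1⟩ := h
    exact ⟨h0, F', hF', ih h1⟩

lemma SymC.zero_weaken {m : ℕ} {F : En n → En n → ℂ} (h : SymC e R 0 m F) :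
    SymC e R 0 (m+1) F := by
  obtain ⟨C, hC, h⟩ := h
  refine ⟨C * |R|, by positivity, fun x ξ hξ hR => (h x ξ hξ hR).trans ?_⟩
  have hp : 0 < ‖ξ‖ := norm_pos_iff.2 hξ
  rw [pow_succ]
  have : 1 ≤ |R| * ‖ξ‖⁻¹ := by
    rw [← div_eq_mul_inv, one_le_div hp]
    exact hR.le.trans (le_abs_self R)
  have h2 : 0 ≤ C * ‖ξ‖⁻¹ ^ m := by positivity
  nlinarith

lemma SymC.weaken {K : ℕ} : ∀ {m : ℕ} {F : En n → En n → ℂ}, SymC e R K m F →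
    SymC e R K (m+1) F := by
  induction K with
  | zero => intro m F h; exact SymC.zero_weaken h
  | succ K ih =>
    intro m F h
    obtain ⟨h0, F', hF', h1⟩ := h
    exact ⟨SymC.zero_weaken (e := e) h0, F', hF', ih h1⟩

lemma SymC.zero_add {m : ℕ} {F G : En n → En n → ℂ} (h : SymC e R 0 m F) (h' : SymC e R 0 m G) :
    SymC e R 0 m (fun x ξ => F x ξ + G x ξ) := by
  obtain ⟨C, hC, h⟩ := h
  obtain ⟨C', hC', h'⟩ := h'
  refine ⟨C + C', by positivity, fun x ξ hξ hR => (norm_add_le _ _).trans ?_⟩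
  rw [add_mul]
  exact add_le_add (h x ξ hξ hR) (h' x ξ hξ hR)

lemma SymC.add {K : ℕ} : ∀ {m : ℕ} {F G : En n → En n → ℂ}, SymC e R K m F → SymC e R K m G →
    SymC e R K m (fun x ξ => F x ξ + G x ξ) := by
  induction K with
  | zero => intro m F G h h'; exact SymC.zero_add h h'
  | succ K ih =>
    intro m F G h h'
    obtain ⟨h0, F', hF', h1⟩ := h
    obtain ⟨h0', G', hG', h1'⟩ := h'
    exact ⟨SymC.zero_add (e := e) h0 h0', _, fun x ξ hξ hR =>
      HasDerivAt.add (hF' x ξ hξ hR) (hG' x ξ hξ hR), ih h1 h1'⟩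

lemma SymC.zero_mul {m m' : ℕ} {F G : En n → En n → ℂ} (h : SymC e R 0 m F)
    (h' : SymC e R 0 m' G) :
    SymC e R 0 (m+m') (fun x ξ => F x ξ * G x ξ) := by
  obtain ⟨C, hC, h⟩ := h
  obtain ⟨C', hC', h'⟩ := h'
  refine ⟨C * C', by positivity, fun x ξ hξ hR => ?_⟩
  rw [norm_mul]
  calc _ ≤ (C * ‖ξ‖⁻¹ ^ m) * (C' * ‖ξ‖⁻¹ ^ m') :=
        mul_le_mul (h x ξ hξ hR) (h' x ξ hξ hR) (norm_nonneg _) (by positivity)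
    _ = _ := by ring

lemma SymC.mul {K : ℕ} : ∀ {m m' : ℕ} {F G : En n → En n → ℂ}, SymC e R K m F →
    SymC e R K m' G → SymC e R K (m+m') (fun x ξ => F x ξ * G x ξ) := by
  induction K with
  | zero => intro m m' F G h h'; exact SymC.zero_mul h h'
  | succ K ih =>
    intro m m' F G h h'
    have hp := h.pred
    have hp' := h'.pred
    obtain ⟨h0, F', hF', h1⟩ := h
    obtain ⟨h0', G', hG', h1'⟩ := h'
    refine ⟨SymC.zero_mul (e := e) h0 h0', fun x ξ => F' x ξ * G x ξ + F x ξ * G' x ξ,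
      fun x ξ hξ hR => ?_, ?_⟩
    · have := HasDerivAt.mul (hF' x ξ hξ hR) (hG' x ξ hξ hR)
      simp only [zero_smul, add_zero] at this
      exact this
    · have a1 := ih h1 hp'
      have a2 := ih hp h1'
      have e1 : m + 1 + m' = m + m' + 1 := by omega
      rw [e1] at a1
      exact a1.add a2

lemma SymC.const_mul {K m : ℕ} {F : En n → En n → ℂ} (c : ℂ) (h : SymC e R K m F) :
    SymC e R K m (fun x ξ => c * F x ξ) := by
  induction K generalizing m F with
  | zero =>
    obtain ⟨C, hC, h⟩ := h
    refine ⟨‖c‖ * C, by positivity, fun x ξ hξ hR => ?_⟩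
    rw [norm_mul, mul_assoc]
    exact mul_le_mul_of_nonneg_left (h x ξ hξ hR) (norm_nonneg _)
  | succ K ih =>
    obtain ⟨⟨C, hC, h⟩, F', hF', h1⟩ := h
    refine ⟨⟨‖c‖ * C, by positivity, fun x ξ hξ hR => ?_⟩, fun x ξ => c * F' x ξ,
      fun x ξ hξ hR => HasDerivAt.const_mul c (hF' x ξ hξ hR), ih h1⟩
    rw [norm_mul, mul_assoc]
    exact mul_le_mul_of_nonneg_left (h x ξ hξ hR) (norm_nonneg _)

/-- Extract the sequence of derivatives. -/
lemma SymC.seq {K : ℕ} : ∀ {m : ℕ} {F : En n → En n → ℂ}, SymC e R K m F →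
    ∃ g : ℕ → En n → En n → ℂ, g 0 = F ∧
      (∀ k < K, ∀ x ξ, ξ ≠ 0 → ‖ξ‖ < R → HasLineDerivAt ℝ (g k x) (g (k+1) x ξ) ξ e) ∧
      ∃ C : ℝ, 0 ≤ C ∧ ∀ x ξ, ξ ≠ 0 → ‖ξ‖ < R → ‖g K x ξ‖ ≤ C * (‖ξ‖⁻¹) ^ (m+K) := by
  induction K with
  | zero => intro m F h; exact ⟨fun _ => F, rfl, by simp, h⟩
  | succ K ih =>
    intro m F h
    obtain ⟨h0, F', hF', h1⟩ := h
    obtain ⟨g, hg0, hg, C, hC, hb⟩ := ih h1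
    refine ⟨fun k => Nat.casesOn k F g, rfl, ?_, C, hC, ?_⟩
    · intro k hk x ξ hξ hR
      cases k with
      | zero => simpa [hg0] using hF' x ξ hξ hR
      | succ k => exact hg k (by omega) x ξ hξ hR
    · intro x ξ hξ hR
      have := hb x ξ hξ hR
      rwa [show m + 1 + K = m + (K + 1) by omega] at this

end sym

lemma foldr_single_not_mem {n : ℕ} {F : Type} [NormedAddCommGroup F] [NormedSpace ℝ F]
    (j : Fin n) (k : ℕ) (f : En n → F) (l : List (Fin n)) (hj : j ∉ l) :
    l.foldr (fun i g => (pd i)^[(Pi.single j k : Fin n → ℕ) i] g) f = f := by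
  induction l with
  | nil => rfl
  | cons a l ih =>
    simp only [List.mem_cons, not_or] at hj
    rw [List.foldr_cons, ih hj.2, Pi.single_eq_of_ne (Ne.symm hj.1)]
    rfl

lemma foldr_single_mem {n : ℕ} {F : Type} [NormedAddCommGroup F] [NormedSpace ℝ F]
    (j : Fin n) (k : ℕ) (f : En n → F) (l : List (Fin n)) (hl : l.Nodup) (hj : j ∈ l) :
    l.foldr (fun i g => (pd i)^[(Pi.single j k : Fin n → ℕ) i] g) f = (pd j)^[k] f := by
  induction l with
  | nil => simp at hj
  | cons a l ih =>
    rw [List.nodup_cons] at hl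
    rw [List.foldr_cons]
    by_cases h : a = j
    · subst h
      rw [foldr_single_not_mem _ _ _ _ hl.1, Pi.single_eq_same]
    · have : j ∈ l := by
        rcases List.mem_cons.1 hj with h' | h'
        · exact absurd h'.symm h
        · exact h'
      rw [ih hl.2 this, Pi.single_eq_of_ne h]
      rfl

lemma mderiv_single {n : ℕ} {F : Type} [NormedAddCommGroup F] [NormedSpace ℝ F]
    (j : Fin n) (k : ℕ) (f : En n → F) : mderiv (Pi.single j k) f = (pd j)^[k] f :=
  foldr_single_mem j k f _ (List.nodup_finRange n) (List.mem_finRange j)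

lemma mderiv_zero {n : ℕ} {F : Type} [NormedAddCommGroup F] [NormedSpace ℝ F]
    (f : En n → F) : mderiv 0 f = f := by
  unfold mderiv
  induction (List.finRange n) with
  | nil => rfl
  | cons a l ih => rw [List.foldr_cons, ih]; rfl

lemma phi_bound {n : ℕ} {ψ : En n → En n → ℝ} (hψ : PhiClass 1 ψ) (j : Fin n) (k : ℕ) :
    ∃ C : ℝ, 0 ≤ C ∧ ∀ x ξ : En n, ξ ≠ 0 → |(pd j)^[k+1] (ψ x) ξ| ≤ C * (‖ξ‖⁻¹) ^ k := by
  have hdeg : mdeg (Pi.single j (k+1) : Fin n → ℕ) = k+1 := by simp [mdeg]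
  have hdeg0 : mdeg (0 : Fin n → ℕ) = 0 := by simp [mdeg]
  obtain ⟨C, hC⟩ := hψ.2.2 (Pi.single j (k+1)) 0 (by rw [hdeg]; omega)
  refine ⟨|C|, abs_nonneg C, fun x ξ hξ => ?_⟩
  have h := hC x ξ hξ
  have hm : mixedD (Pi.single j (k+1)) 0 ψ x ξ = (pd j)^[k+1] (ψ x) ξ := by
    unfold mixedD
    simp only [mderiv_zero, mderiv_single]
  rw [hm, hdeg] at h
  have hp : 0 < ‖ξ‖ := norm_pos_iff.2 hξ
  push_cast at h
  rw [add_sub_cancel_right, Real.rpow_natCast] at h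
  rw [inv_pow, ← div_eq_mul_inv, le_div_iff₀ (by positivity), mul_comm]
  exact h.trans (le_abs_self C)

lemma pd_iter_contDiffOn {n : ℕ} {f : En n → ℝ} (hf : ContDiffOn ℝ (⊤ : ℕ∞) f {0}ᶜ) (j : Fin n)
    (k : ℕ) : ContDiffOn ℝ (⊤ : ℕ∞) ((pd j)^[k] f) {0}ᶜ := by
  induction k with
  | zero => exact hf
  | succ k ih =>
    rw [Function.iterate_succ_apply']
    exact (ih.fderiv_of_isOpen isOpen_compl_singleton (by simp)).clm_apply contDiffOn_const

lemma phi_contDiffOn {n : ℕ} {ψ : En n → En n → ℝ} (hψ : PhiClass 1 ψ) (x : En n) :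
    ContDiffOn ℝ (⊤ : ℕ∞) (ψ x) {0}ᶜ := by
  have : ContDiffOn ℝ (⊤ : ℕ∞) (fun ξ : En n => (x, ξ)) {0}ᶜ := by fun_prop
  exact hψ.1.comp this (fun ξ hξ => hξ)

lemma psi_sym {n : ℕ} {ψ : En n → En n → ℝ} (hψ : PhiClass 1 ψ) (j : Fin n) (R : ℝ) (K : ℕ) :
    ∀ k : ℕ, SymC (EuclideanSpace.single j (1:ℝ)) R K k
      (fun x ξ => (((pd j)^[k+1] (ψ x) ξ : ℝ) : ℂ)) := by
  have h0 : ∀ k : ℕ, SymC (EuclideanSpace.single j (1:ℝ)) R 0 k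
      (fun x ξ => (((pd j)^[k+1] (ψ x) ξ : ℝ) : ℂ)) := by
    intro k
    obtain ⟨C, hC, h⟩ := phi_bound hψ j k
    exact ⟨C, hC, fun x ξ hξ _ => by simpa using h x ξ hξ⟩
  induction K with
  | zero => exact h0
  | succ K ih =>
    intro k
    refine ⟨h0 k, _, fun x ξ hξ _ => ?_, ih (k+1)⟩
    have hd : DifferentiableAt ℝ ((pd j)^[k+1] (ψ x)) ξ :=
      ((pd_iter_contDiffOn (phi_contDiffOn hψ x) j (k+1)).contDiffAt
        (isOpen_compl_singleton.mem_nhds hξ)).differentiableAt (by simp)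
    have := hd.hasFDerivAt.hasLineDerivAt (EuclideanSpace.single j (1:ℝ))
    rw [Function.iterate_succ_apply' _ (k+1)]
    exact HasDerivAt.ofReal_comp this

lemma eta_iter {n : ℕ} {η : En n → ℂ} (hη : ContDiff ℝ (⊤ : ℕ∞) η)
    (hηc : HasCompactSupport η) (j : Fin n) (k : ℕ) :
    ContDiff ℝ (⊤ : ℕ∞) ((pd j)^[k] η) ∧ HasCompactSupport ((pd j)^[k] η) := by
  induction k with
  | zero => exact ⟨hη, hηc⟩
  | succ k ih =>
    rw [Function.iterate_succ_apply']
    refine ⟨(ih.1.fderiv_right (by simp)).clm_apply contDiff_const, ?_⟩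
    exact ih.2.fderiv_apply (𝕜 := ℝ) _

lemma eta_sym {n : ℕ} {η : En n → ℂ} (hη : ContDiff ℝ (⊤ : ℕ∞) η)
    (hηc : HasCompactSupport η) (j : Fin n) (R : ℝ) (K : ℕ) :
    ∀ m k : ℕ, SymC (EuclideanSpace.single j (1:ℝ)) R K m
      (fun _ ξ => (pd j)^[k] η ξ) := by
  have h0 : ∀ m k : ℕ, SymC (EuclideanSpace.single j (1:ℝ)) R 0 m
      (fun _ ξ => (pd j)^[k] η ξ) := by
    intro m k
    induction m with
    | zero =>
      obtain ⟨C, hC⟩ := (eta_iter hη hηc j k).2.exists_bound_of_continuous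
        (eta_iter hη hηc j k).1.continuous
      exact ⟨|C|, abs_nonneg C, fun x ξ _ _ => by simpa using (hC ξ).trans (le_abs_self C)⟩
    | succ m ih => exact ih.zero_weaken
  induction K with
  | zero => exact h0
  | succ K ih =>
    intro m k
    refine ⟨h0 m k, _, fun x ξ hξ _ => ?_, ih (m+1) (k+1)⟩
    have hd : DifferentiableAt ℝ ((pd j)^[k] η) ξ :=
      (eta_iter hη hηc j k).1.differentiable (by simp) ξ
    have := hd.hasFDerivAt.hasLineDerivAt (EuclideanSpace.single j (1:ℝ))
    rw [Function.iterate_succ_apply' _ k]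
    exact this

lemma exp_deriv {n : ℕ} {ψ : En n → En n → ℝ} (hψ : PhiClass 1 ψ) (j : Fin n) (x ξ : En n)
    (hξ : ξ ≠ 0) :
    HasLineDerivAt ℝ (fun ξ => Complex.exp (Complex.I * Complex.ofReal (ψ x ξ)))
      (Complex.I * ((((pd j)^[0+1] (ψ x) ξ : ℝ) : ℂ) *
        Complex.exp (Complex.I * Complex.ofReal (ψ x ξ)))) ξ
      (EuclideanSpace.single j (1:ℝ)) := by
  have hd : DifferentiableAt ℝ (ψ x) ξ :=
    ((phi_contDiffOn hψ x).contDiffAt (isOpen_compl_singleton.mem_nhds hξ)).differentiableAt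
      (by simp)
  have := hd.hasFDerivAt.hasLineDerivAt (EuclideanSpace.single j (1:ℝ))
  have h2 := ((HasDerivAt.ofReal_comp this).const_mul Complex.I).cexp
  refine HasDerivAt.congr_deriv h2 ?_
  simp only [Function.iterate_succ_apply, Function.iterate_zero_apply, pd, zero_smul, add_zero]
  ring

lemma exp_sym {n : ℕ} {ψ : En n → En n → ℝ} (hψ : PhiClass 1 ψ) (j : Fin n) (R : ℝ) (K : ℕ) :
    SymC (EuclideanSpace.single j (1:ℝ)) R K 0
      (fun x ξ => Complex.exp (Complex.I * Complex.ofReal (ψ x ξ))) := by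
  have h0 : SymC (EuclideanSpace.single j (1:ℝ)) R 0 0
      (fun x ξ => Complex.exp (Complex.I * Complex.ofReal (ψ x ξ))) :=
    ⟨1, zero_le_one, fun x ξ _ _ => by rw [Complex.norm_exp_I_mul_ofReal]; simp⟩
  induction K with
  | zero => exact h0
  | succ K ih =>
    exact ⟨h0, _, fun x ξ hξ _ => exp_deriv hψ j x ξ hξ,
      (((psi_sym hψ j R K 0).mul ih).const_mul Complex.I).weaken⟩

/-- The derivatives of the full amplitude. -/
lemma amp_seq {n : ℕ} {η : En n → ℂ} (hη : ContDiff ℝ (⊤ : ℕ∞) η)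
    (hηc : HasCompactSupport η) {ψ : En n → En n → ℝ} (hψ : PhiClass 1 ψ)
    (j : Fin n) (R : ℝ) (K : ℕ) :
    ∃ g : ℕ → En n → En n → ℂ,
      g 0 = (fun x ξ => η ξ * Complex.exp (Complex.I * Complex.ofReal (ψ x ξ))) ∧
      (∀ k < K+1, ∀ x ξ, ξ ≠ 0 → ‖ξ‖ < R →
        HasLineDerivAt ℝ (g k x) (g (k+1) x ξ) ξ (EuclideanSpace.single j (1:ℝ))) ∧
      ∃ C : ℝ, 0 ≤ C ∧ ∀ x ξ, ξ ≠ 0 → ‖ξ‖ < R → ‖g (K+1) x ξ‖ ≤ C * (‖ξ‖⁻¹) ^ K := by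
  have hE := exp_sym hψ j R K
  have h1 := (eta_sym hη hηc j R K 0 1).mul hE
  have h2 := (eta_sym hη hηc j R K 0 0).mul (((psi_sym hψ j R K 0).mul hE).const_mul Complex.I)
  obtain ⟨g, hg0, hg, C, hC, hb⟩ := (h1.add h2).seq
  refine ⟨fun k => Nat.casesOn k
    (fun x ξ => η ξ * Complex.exp (Complex.I * Complex.ofReal (ψ x ξ))) g, rfl, ?_, C, hC, ?_⟩
  · intro k hk x ξ hξ hR
    cases k with
    | zero =>
      have hd : DifferentiableAt ℝ η ξ := hη.differentiable (by simp) ξ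
      have a1 := hd.hasFDerivAt.hasLineDerivAt (EuclideanSpace.single j (1:ℝ))
      have := HasDerivAt.mul a1 (exp_deriv hψ j x ξ hξ)
      simp only [zero_smul, add_zero] at this
      simp only [hg0]
      exact this
    | succ k => exact hg k (by omega) x ξ hξ hR
  · intro x ξ hξ hR
    simpa using hb x ξ hξ hR

lemma psi_zero {n : ℕ} {ψ : En n → En n → ℝ} (hψ : PhiClass 1 ψ) (x : En n) : ψ x 0 = 0 := by
  have := hψ.2.1 x 0 2 two_pos
  rw [smul_zero] at this
  linarith

lemma psi_lin {n : ℕ} {ψ : En n → En n → ℝ} (hψ : PhiClass 1 ψ) :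
    ∃ L : ℝ, 0 ≤ L ∧ ∀ x ξ, |ψ x ξ| ≤ L * ‖ξ‖ := by
  choose C hC h using fun j => phi_bound hψ j 0
  refine ⟨∑ j, C j, Finset.sum_nonneg fun j _ => hC j, fun x ξ => ?_⟩
  by_cases hξ : ξ = 0
  · simp [hξ, psi_zero hψ]
  have hd : DifferentiableAt ℝ (ψ x) ξ :=
    ((phi_contDiffOn hψ x).contDiffAt (isOpen_compl_singleton.mem_nhds hξ)).differentiableAt
      (by simp)
  have h1 : HasDerivAt (fun t : ℝ => ψ x (ξ + t • ξ)) (fderiv ℝ (ψ x) ξ ξ) 0 :=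
    hd.hasFDerivAt.hasLineDerivAt ξ
  have h2 : HasDerivAt (fun t : ℝ => ψ x (ξ + t • ξ)) (ψ x ξ) 0 := by
    have h3 : HasDerivAt (fun t : ℝ => (1 + t) * ψ x ξ) (1 * ψ x ξ) 0 :=
      ((hasDerivAt_id (0:ℝ)).const_add 1).mul_const _
    rw [one_mul] at h3
    refine h3.congr_of_eventuallyEq ?_
    filter_upwards [lt_mem_nhds (show (-1:ℝ) < 0 by norm_num)] with t ht
    rw [← hψ.2.1 x ξ (1+t) (by linarith), add_smul, one_smul]
  have e1 : ψ x ξ = fderiv ℝ (ψ x) ξ ξ := h2.unique h1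
  have e2 : ξ = ∑ i, ξ i • EuclideanSpace.single i (1:ℝ) := by
    ext k
    simp [Finset.sum_apply, Pi.single_apply]
  have e3 : fderiv ℝ (ψ x) ξ ξ = ∑ i, ξ i * pd i (ψ x) ξ := by
    have := congrArg (fderiv ℝ (ψ x) ξ) e2
    rw [map_sum] at this
    simpa [pd] using this
  rw [e1, e3, Finset.sum_mul]
  refine (Finset.abs_sum_le_sum_abs _ _).trans (Finset.sum_le_sum fun i _ => ?_)
  rw [abs_mul, mul_comm]
  have := h i x ξ hξ
  simp only [zero_add, Function.iterate_one, pow_zero, mul_one] at this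
  exact mul_le_mul this (by simpa using PiLp.norm_apply_le ξ i) (abs_nonneg _) (hC i)

/-- Lipschitz bound of the amplitude at the origin. -/
lemma amp_lip {n : ℕ} {η : En n → ℂ} (hη : ContDiff ℝ (⊤ : ℕ∞) η)
    (hηc : HasCompactSupport η) {ψ : En n → En n → ℝ} (hψ : PhiClass 1 ψ) :
    ∃ L : ℝ, 0 ≤ L ∧ ∀ x ξ,
      ‖η ξ * Complex.exp (Complex.I * Complex.ofReal (ψ x ξ)) - η 0‖ ≤ L * ‖ξ‖ := by
  obtain ⟨L1, hL1, h1⟩ := psi_lin hψ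
  obtain ⟨C, hC⟩ := hηc.exists_bound_of_continuous hη.continuous
  obtain ⟨L2, h2⟩ := hη.lipschitzWith_of_hasCompactSupport hηc (by simp)
  have hC0 : 0 ≤ C := (norm_nonneg _).trans (hC 0)
  refine ⟨C * L1 + L2, by positivity, fun x ξ => ?_⟩
  have e : η ξ * Complex.exp (Complex.I * Complex.ofReal (ψ x ξ)) - η 0 =
    η ξ * (Complex.exp (Complex.I * Complex.ofReal (ψ x ξ)) - 1) + (η ξ - η 0) := by ring
  rw [e, add_mul]
  refine (norm_add_le _ _).trans (add_le_add ?_ ?_)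
  · rw [norm_mul, mul_assoc]
    exact mul_le_mul (hC ξ) (Real.norm_exp_I_mul_ofReal_sub_one_le.trans (h1 x ξ))
      (norm_nonneg _) hC0
  · simpa using h2.norm_sub_le ξ 0

/-- Pointwise bound for the iterated difference. -/
lemma diff_bound {n : ℕ} (hn : 1 ≤ n) {η : En n → ℂ} (hη : ContDiff ℝ (⊤ : ℕ∞) η)
    (hηc : HasCompactSupport η) {ψ : En n → En n → ℝ} (hψ : PhiClass 1 ψ)
    {α : ℝ} (hα0 : 0 < α) (hα1 : α < 1) (A : ℝ) (hA : 0 ≤ A) (j : Fin n) :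
    ∃ C R : ℝ, 0 ≤ C ∧ ∀ (x : En n) (t : ℝ), t ≠ 0 → |t| ≤ A → ∀ ξ : En n, ξ ≠ 0 →
      ‖(fwdDiff (t • EuclideanSpace.single j (1:ℝ)))^[n+1]
        (fun ξ => η ξ * Complex.exp (Complex.I * Complex.ofReal (ψ x ξ))) ξ‖ ≤
      (Metric.ball (0 : En n) R).indicator
        (fun ξ => C * |t| ^ ((n:ℝ) + α) * ‖ξ‖ ^ (-((n:ℝ) + α - 1))) ξ := by
  obtain ⟨R0, hR0⟩ := hηc.isCompact.isBounded.exists_norm_le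
  obtain ⟨L, hL, hlip⟩ := amp_lip hη hηc hψ
  set N : ℝ := (n:ℝ) + 1 with hN
  have hNpos : 0 < N := by positivity
  obtain ⟨g, hg0, hg, D, hD, hgb⟩ := amp_seq hη hηc hψ j (R0 + 1 + N * A + N * A) n
  set e : En n := EuclideanSpace.single j (1:ℝ) with he
  have hen : ‖e‖ = 1 := by simp [he]
  set C1 : ℝ := 2 ^ (n+1) * (L * (3 * N)) * (2 * N) ^ ((n:ℝ) + α - 1) with hC1
  set C2 : ℝ := D * 2 ^ n * (2 * N) ^ (α - 1) with hC2
  have hC1n : 0 ≤ C1 := by positivity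
  have hC2n : 0 ≤ C2 := by positivity
  refine ⟨C1 + C2, R0 + 1 + N * A, by positivity, fun x t ht htA ξ hξ => ?_⟩
  have htp : 0 < |t| := abs_pos.2 ht
  have hξp : 0 < ‖ξ‖ := norm_pos_iff.2 hξ
  have hsn : ∀ s : ℝ, 0 ≤ s → s ≤ N → ‖s • t • e‖ ≤ N * |t| := by
    intro s hs hs'
    rw [norm_smul, norm_smul, hen, mul_one, Real.norm_eq_abs, Real.norm_eq_abs, abs_of_nonneg hs]
    exact mul_le_mul_of_nonneg_right hs' htp.le
  have hNA : N * |t| ≤ N * A := mul_le_mul_of_nonneg_left htA hNpos.le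
  by_cases hb : ξ ∈ Metric.ball (0 : En n) (R0 + 1 + N * A)
  swap
  · rw [Set.indicator_of_notMem hb]
    have hb' : R0 + 1 + N * A ≤ ‖ξ‖ := by simpa using hb
    have := fd_trivial (t • e) 0 (n+1)
      (fun ξ => η ξ * Complex.exp (Complex.I * Complex.ofReal (ψ x ξ))) ξ (fun k hk => by
        have hk' : (k:ℝ) ≤ N := by rw [hN]; exact_mod_cast hk
        have h1 := hsn k (Nat.cast_nonneg k) hk'
        have h2 := norm_sub_le_norm_add ξ ((k:ℝ) • t • e)
        have : η (ξ + (k:ℝ) • t • e) = 0 := by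
          by_contra hne
          have := hR0 _ (subset_tsupport _ hne)
          linarith
        simp [this])
    simpa using this
  rw [Set.indicator_of_mem hb]
  have hb' : ‖ξ‖ < R0 + 1 + N * A := by simpa using hb
  have hw : 0 ≤ |t| ^ ((n:ℝ) + α) * ‖ξ‖ ^ (-((n:ℝ) + α - 1)) := by positivity
  rw [mul_assoc, add_mul]
  by_cases hfar : 2 * N * |t| ≤ ‖ξ‖
  · -- far case
    have key : ‖(fwdDiff (t • e))^[n+1]
        (fun ξ => η ξ * Complex.exp (Complex.I * Complex.ofReal (ψ x ξ))) ξ‖ ≤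
        |t| ^ (n+1) * (D * (2 * ‖ξ‖⁻¹) ^ n) := by
      rw [fd_line]
      have hpt : ∀ s ∈ Set.Icc (0:ℝ) ((n+1:ℕ):ℝ), ‖ξ‖ / 2 ≤ ‖ξ + s • t • e‖ ∧
          ‖ξ + s • t • e‖ < R0 + 1 + N * A + N * A := by
        intro s hs
        have h1 := hsn s hs.1 (by rw [hN]; exact_mod_cast hs.2)
        have h2 := norm_sub_le_norm_add ξ (s • t • e)
        have h3 := norm_add_le ξ (s • t • e)
        constructor <;> linarith
      have := fd_bound (|t| ^ (n+1) * (D * (2 * ‖ξ‖⁻¹) ^ n)) (n+1)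
        (fun k s => (t:ℂ) ^ k * g k x (ξ + s • t • e)) ?_ ?_
      · simpa [hg0] using this
      · intro k hk s hs
        obtain ⟨h1, h2⟩ := hpt s hs
        have hne : ξ + s • t • e ≠ 0 := by
          rw [← norm_pos_iff]; linarith
        have h3 : HasDerivAt (fun u : ℝ => g k x (ξ + s • t • e + u • e))
          (g (k+1) x (ξ + s • t • e)) 0 := hg k hk x _ hne h2
        have h4 : HasDerivAt (fun u : ℝ => t * (u - s)) t s := by
          simpa using ((hasDerivAt_id s).sub_const s).const_mul t
        have h5 := HasDerivAt.scomp_of_eq s h3 h4 (by simp)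
        have h6 := h5.const_mul ((t:ℂ) ^ k)
        have ef : (fun y : ℝ => (t:ℂ) ^ k * g k x (ξ + y • t • e)) = fun y : ℝ =>
            (t:ℂ) ^ k * ((fun u : ℝ => g k x (ξ + s • t • e + u • e)) ∘
              fun u => t * (u - s)) y := by
          funext u
          simp only [Function.comp]
          congr 2
          rw [add_assoc]
          congr 1
          simp only [smul_smul, ← add_smul]
          congr 1
          ring
        change HasDerivAt (fun y : ℝ => (t:ℂ) ^ k * g k x (ξ + y • t • e)) _ s
        rw [ef]
        refine h6.congr_deriv ?_
        rw [Complex.real_smul]; ring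
      · intro s hs
        obtain ⟨h1, h2⟩ := hpt s hs
        have hne : ξ + s • t • e ≠ 0 := by
          rw [← norm_pos_iff]; linarith
        rw [norm_mul, norm_pow, Complex.norm_real, Real.norm_eq_abs]
        refine mul_le_mul_of_nonneg_left ((hgb x _ hne h2).trans ?_) (by positivity)
        refine mul_le_mul_of_nonneg_left ?_ hD
        refine pow_le_pow_left₀ (by positivity) ?_ _
        calc ‖ξ + s • t • e‖⁻¹ ≤ (‖ξ‖/2)⁻¹ := inv_anti₀ (by positivity) h1
          _ = _ := by rw [inv_div]; ring
    refine key.trans (le_trans ?_ (le_add_of_nonneg_left (mul_nonneg hC1n hw)))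
    have hpow : ‖ξ‖ ^ (α - 1) ≤ (2 * N) ^ (α - 1) * |t| ^ (α - 1) := by
      rw [← Real.mul_rpow (by positivity) htp.le]
      exact Real.rpow_le_rpow_of_nonpos (by positivity) hfar (by linarith)
    have e1 : (‖ξ‖⁻¹) ^ n = ‖ξ‖ ^ (-((n:ℝ) + α - 1)) * ‖ξ‖ ^ (α - 1) := by
      rw [← Real.rpow_add hξp, ← Real.rpow_natCast, Real.inv_rpow hξp.le, ← Real.rpow_neg hξp.le]
      congr 1; ring
    have e2 : |t| ^ ((n:ℝ) + α) = |t| ^ (n+1) * |t| ^ (α - 1) := by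
      rw [← Real.rpow_natCast, ← Real.rpow_add htp]
      congr 1; push_cast; ring
    rw [mul_pow, e1, e2, hC2]
    calc |t| ^ (n+1) * (D * (2 ^ n * (‖ξ‖ ^ (-((n:ℝ) + α - 1)) * ‖ξ‖ ^ (α - 1))))
        ≤ |t| ^ (n+1) * (D * (2 ^ n * (‖ξ‖ ^ (-((n:ℝ) + α - 1)) *
            ((2 * N) ^ (α - 1) * |t| ^ (α - 1))))) := by gcongr
      _ = _ := by ring
  · -- near case
    push Not at hfar
    have key : ‖(fwdDiff (t • e))^[n+1]
        (fun ξ => η ξ * Complex.exp (Complex.I * Complex.ofReal (ψ x ξ))) ξ‖ ≤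
        2 ^ (n+1) * (L * (3 * N * |t|)) := by
      rw [fd_sub_const _ _ _ (η 0)]
      refine fd_trivial _ _ _ _ _ (fun k hk => (hlip x _).trans ?_)
      have hk' : (k:ℝ) ≤ N := by rw [hN]; exact_mod_cast hk
      have h1 := hsn k (Nat.cast_nonneg k) hk'
      have h3 := norm_add_le ξ ((k:ℝ) • t • e)
      refine mul_le_mul_of_nonneg_left ?_ hL
      linarith
    refine key.trans (le_trans ?_ (le_add_of_nonneg_right (mul_nonneg hC2n hw)))
    have hn' : (1:ℝ) ≤ n := by exact_mod_cast hn
    have hpow : (2 * N) ^ (-((n:ℝ) + α - 1)) * |t| ^ (-((n:ℝ) + α - 1)) ≤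
        ‖ξ‖ ^ (-((n:ℝ) + α - 1)) := by
      rw [← Real.mul_rpow (by positivity) htp.le]
      exact Real.rpow_le_rpow_of_nonpos hξp hfar.le (by linarith)
    have e1 : (2 * N) ^ ((n:ℝ) + α - 1) * (2 * N) ^ (-((n:ℝ) + α - 1)) = 1 := by
      rw [← Real.rpow_add (by positivity), add_neg_cancel, Real.rpow_zero]
    have e2 : |t| ^ ((n:ℝ) + α) * |t| ^ (-((n:ℝ) + α - 1)) = |t| := by
      rw [← Real.rpow_add htp]
      conv_rhs => rw [← Real.rpow_one |t|]
      congr 1; ring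
    calc 2 ^ (n+1) * (L * (3 * N * |t|)) = 2 ^ (n+1) * (L * (3 * N)) *
          ((2 * N) ^ ((n:ℝ) + α - 1) * (2 * N) ^ (-((n:ℝ) + α - 1))) *
          (|t| ^ ((n:ℝ) + α) * |t| ^ (-((n:ℝ) + α - 1))) := by rw [e1, e2]; ring
      _ = C1 * (|t| ^ ((n:ℝ) + α) *
          ((2 * N) ^ (-((n:ℝ) + α - 1)) * |t| ^ (-((n:ℝ) + α - 1)))) := by rw [hC1]; ring
      _ ≤ _ := by gcongr

lemma exists_big_coord {n : ℕ} (hn : 1 ≤ n) (z : En n) : ∃ j, ‖z‖ ≤ n * |z j| := by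
  have : Nonempty (Fin n) := ⟨⟨0, hn⟩⟩
  obtain ⟨j, hj⟩ := Finite.exists_max (fun i => |z i|)
  refine ⟨j, ?_⟩
  have e2 : z = ∑ i, z i • EuclideanSpace.single i (1:ℝ) := by
    ext k
    simp [Finset.sum_apply, Pi.single_apply]
  calc ‖z‖ = ‖∑ i, z i • EuclideanSpace.single i (1:ℝ)‖ := by rw [← e2]
    _ ≤ ∑ i, ‖z i • EuclideanSpace.single i (1:ℝ)‖ := norm_sum_le _ _
    _ ≤ ∑ _i : Fin n, |z j| := Finset.sum_le_sum fun i _ => by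
        rw [norm_smul]; simpa using hj i
    _ = _ := by simp

lemma large_z {n : ℕ} (hn : 1 ≤ n) {η : En n → ℂ} (hη : ContDiff ℝ (⊤ : ℕ∞) η)
    (hηc : HasCompactSupport η) {ψ : En n → En n → ℝ} (hψ : PhiClass 1 ψ)
    {α : ℝ} (hα0 : 0 < α) (hα1 : α < 1) (j : Fin n) :
    ∃ C : ℝ, 0 ≤ C ∧ ∀ x z : En n, 1 ≤ ‖z‖ → ‖z‖ ≤ n * |z j| →
      ‖∫ ξ : En n, η ξ * Complex.exp (Complex.I * Complex.ofReal (ψ x ξ + ⟪z, ξ⟫))‖ ≤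
        C * ‖z‖ ^ (-(n : ℝ) - α) := by
  obtain ⟨C, R, hC, hb⟩ := diff_bound hn hη hηc hψ hα0 hα1 (Real.pi * n) (by positivity) j
  set W : En n → ℝ := (Metric.ball (0 : En n) R).indicator
    (fun ξ => ‖ξ‖ ^ (-((n:ℝ) + α - 1))) with hW
  have hWi : Integrable W := by
    rw [hW, integrable_indicator_iff measurableSet_ball]
    refine integrableOn_ball_of_norm_le_rpow (C := 1) (α := (n:ℝ) + α - 1) (by simpa using hn)
      (by simp; linarith) (Filter.Eventually.of_forall fun ξ => ?_) ?_
    · rw [Real.norm_of_nonneg (by positivity), one_mul]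
    · exact (measurable_norm.pow_const _).aestronglyMeasurable
  have hWn : 0 ≤ ∫ ξ, W ξ := integral_nonneg fun ξ =>
    Set.indicator_nonneg (fun ξ _ => by positivity) ξ
  refine ⟨C * (Real.pi * n) ^ ((n:ℝ) + α) * ∫ ξ, W ξ, by positivity, fun x z hz1 hzj => ?_⟩
  have hzp : 0 < ‖z‖ := by linarith
  have hnp : (0:ℝ) < n := by exact_mod_cast hn
  have hzjp : 0 < |z j| := by
    by_contra h
    have : n * |z j| ≤ 0 := mul_nonpos_of_nonneg_of_nonpos hnp.le (not_lt.1 h)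
    linarith
  have hzj0 : z j ≠ 0 := abs_pos.1 hzjp
  have eK : ∀ ξ : En n, η ξ * Complex.exp (Complex.I * Complex.ofReal (ψ x ξ + ⟪z, ξ⟫)) =
      (fun ξ => η ξ * Complex.exp (Complex.I * Complex.ofReal (ψ x ξ))) ξ *
        Complex.exp (Complex.I * Complex.ofReal ⟪z, ξ⟫) := by
    intro ξ
    push_cast
    rw [mul_add, Complex.exp_add]
    ring
  simp_rw [eK]
  by_cases hintg : Integrable (fun ξ : En n =>
    (fun ξ => η ξ * Complex.exp (Complex.I * Complex.ofReal (ψ x ξ))) ξ *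
        Complex.exp (Complex.I * Complex.ofReal ⟪z, ξ⟫))
  swap
  · rw [integral_undef hintg, norm_zero]; positivity
  set t : ℝ := Real.pi / z j with ht
  have ht0 : t ≠ 0 := div_ne_zero Real.pi_ne_zero hzj0
  have hta : |t| ≤ Real.pi * n / ‖z‖ := by
    rw [ht, abs_div, abs_of_pos Real.pi_pos, div_le_div_iff₀ hzjp hzp, mul_assoc]
    exact mul_le_mul_of_nonneg_left hzj Real.pi_pos.le
  have hta' : |t| ≤ Real.pi * n := hta.trans (div_le_self (by positivity) hz1)
  have hzv : ⟪z, t • EuclideanSpace.single j (1:ℝ)⟫ = Real.pi := by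
    rw [inner_smul_right, EuclideanSpace.inner_single_right]
    simp [ht]
    field_simp
  have h2 := fd_integral z _ hzv (n+1) _ hintg
  have h3 : ‖∫ ξ, (fwdDiff (t • EuclideanSpace.single j (1:ℝ)))^[n+1]
      (fun ξ => η ξ * Complex.exp (Complex.I * Complex.ofReal (ψ x ξ))) ξ *
        Complex.exp (Complex.I * Complex.ofReal ⟪z, ξ⟫)‖ ≤
      ∫ ξ, C * |t| ^ ((n:ℝ) + α) * W ξ := by
    refine norm_integral_le_of_norm_le (hWi.const_mul _) ?_
    have : Nonempty (Fin n) := ⟨j⟩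
    have hae : ∀ᵐ ξ : En n, ξ ≠ 0 := Measure.ae_ne volume 0
    filter_upwards [hae] with ξ hξ
    rw [norm_mul, Complex.norm_exp_I_mul_ofReal, mul_one]
    refine (hb x t ht0 hta' ξ hξ).trans (le_of_eq ?_)
    rw [hW]
    simp only [Set.indicator_apply]
    split_ifs <;> simp
  rw [h2, integral_const_mul, norm_mul, norm_pow] at h3
  have h4 : (1:ℝ) ≤ ‖(-2:ℂ)‖ ^ (n+1) := one_le_pow₀ (by simp)
  refine (le_mul_of_one_le_left (norm_nonneg _) h4).trans (h3.trans ?_)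
  have h5 : |t| ^ ((n:ℝ) + α) ≤ (Real.pi * n) ^ ((n:ℝ) + α) * ‖z‖ ^ (-(n:ℝ) - α) := by
    calc |t| ^ ((n:ℝ) + α) ≤ (Real.pi * n / ‖z‖) ^ ((n:ℝ) + α) :=
          Real.rpow_le_rpow (abs_nonneg _) hta (by positivity)
      _ = _ := by
        rw [Real.div_rpow (by positivity) hzp.le, div_eq_mul_inv, ← Real.rpow_neg hzp.le]
        congr 2; ring
  calc C * |t| ^ ((n:ℝ) + α) * ∫ ξ, W ξ
      ≤ C * ((Real.pi * n) ^ ((n:ℝ) + α) * ‖z‖ ^ (-(n:ℝ) - α)) * ∫ ξ, W ξ := by gcongr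
    _ = _ := by ring


/-- low frequency kernel estimate, Lemma 4.1. -/
theorem statement2 {n : ℕ} (η : En n → ℂ) (hη : ContDiff ℝ (⊤ : ℕ∞) η)
    (hηc : HasCompactSupport η)
    (ψ : En n → En n → ℝ) (hψ : PhiClass 1 ψ)
    (α : ℝ) (hα0 : 0 < α) (hα1 : α < 1) :
    ∃ c : ℝ, 0 < c ∧ ∀ x z : En n,
      ‖∫ ξ : En n, η ξ * Complex.exp (Complex.I * Complex.ofReal (ψ x ξ + ⟪z, ξ⟫))‖ ≤
        c * (1 + ‖z‖) ^ (-(n : ℝ) - α) := by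

  have hI : ∀ x z : En n,
      ‖∫ ξ : En n, η ξ * Complex.exp (Complex.I * Complex.ofReal (ψ x ξ + ⟪z, ξ⟫))‖ ≤
        ∫ ξ, ‖η ξ‖ := by
    intro x z
    refine (norm_integral_le_integral_norm _).trans (le_of_eq ?_)
    congr 1
    funext ξ
    rw [norm_mul, Complex.norm_exp_I_mul_ofReal, mul_one]
  set I0 : ℝ := ∫ ξ, ‖η ξ‖ with hI0
  have hI0n : 0 ≤ I0 := integral_nonneg fun ξ => norm_nonneg _
  rcases Nat.eq_zero_or_pos n with h0 | hn
  · subst h0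
    refine ⟨I0 + 1, by positivity, fun x z => (hI x z).trans ?_⟩
    have : z = 0 := Subsingleton.elim _ _
    rw [this, norm_zero, add_zero, Real.one_rpow]
    linarith
  choose C hC h using fun j => large_z hn hη hηc hψ hα0 hα1 j
  have hCs : 0 ≤ ∑ j, C j := Finset.sum_nonneg fun j _ => hC j
  refine ⟨((∑ j, C j) + I0 + 1) * 2 ^ ((n:ℝ) + α), by positivity, fun x z => ?_⟩
  have e2 : (2:ℝ) ^ ((n:ℝ) + α) * 2 ^ (-(n:ℝ) - α) = 1 := by
    rw [← Real.rpow_add two_pos]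
    simp
  by_cases hz : 1 ≤ ‖z‖
  · obtain ⟨j, hj⟩ := exists_big_coord hn z
    refine (h j x z hz hj).trans ?_
    have h1 : (2 * ‖z‖) ^ (-(n:ℝ) - α) ≤ (1 + ‖z‖) ^ (-(n:ℝ) - α) :=
      Real.rpow_le_rpow_of_nonpos (by positivity) (by linarith)
        (by linarith [Nat.cast_nonneg (α := ℝ) n])
    rw [Real.mul_rpow two_pos.le (norm_nonneg _)] at h1
    have h2 : C j ≤ (∑ j, C j) + I0 + 1 := by
      have := Finset.single_le_sum (fun i _ => hC i) (Finset.mem_univ j)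
      linarith
    calc C j * ‖z‖ ^ (-(n:ℝ) - α) = C j * (2:ℝ) ^ ((n:ℝ) + α) *
          (2 ^ (-(n:ℝ) - α) * ‖z‖ ^ (-(n:ℝ) - α)) := by
          rw [mul_assoc, ← mul_assoc (2 ^ ((n:ℝ) + α)), e2, one_mul]
      _ ≤ _ := by gcongr
  · push Not at hz
    refine (hI x z).trans ?_
    have h1 : (2:ℝ) ^ (-(n:ℝ) - α) ≤ (1 + ‖z‖) ^ (-(n:ℝ) - α) :=
      Real.rpow_le_rpow_of_nonpos (by positivity) (by linarith)
        (by linarith [Nat.cast_nonneg (α := ℝ) n])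
    calc I0 ≤ ((∑ j, C j) + I0 + 1) * ((2:ℝ) ^ ((n:ℝ) + α) * 2 ^ (-(n:ℝ) - α)) := by
          rw [e2]; linarith
      _ = ((∑ j, C j) + I0 + 1) * (2:ℝ) ^ ((n:ℝ) + α) * 2 ^ (-(n:ℝ) - α) := by ring
      _ ≤ _ := by gcongr
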